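/- Fix σ with 0<σ≤1 and let K:ℕ→ℕ with K(m)≥1 be such that limsup_{m→∞} p_m^σ/(K(m)·ln p_m) < ∞. Then the mean error ⟨E_m^{(σ)}⟩ := (1/K(m))·Σ_{k=0}^{K(m)−1} E_m^{(σ)}(k,K(m)) satisfies ⟨E_m^{(σ)}⟩ = o( p_m^σ/(K(m)·ln p_m) ) as m→∞; in particular ⟨E_m^{(σ)}⟩ → 0. -/

import Mathlib

open Filter Asymptotics
open scoped Topology

noncomputable section

/-- The `j`-th prime number, `0`-indexed: `nthPrime 0 = 2`, `nthPrime 1 = 3`, … -/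
def nthPrime (j : ℕ) : ℕ := Nat.nth Nat.Prime j

/-- The partition function `Z_m = ∏_{j=1}^m (1 + 1/p_j)`. -/
def Zm (m : ℕ) : ℝ := ∏ j ∈ Finset.range m, (1 + 1 / (nthPrime j : ℝ))

/-- The element `n = ∏_{j=1}^m p_j^{ν_j}` of `Ω_m` parametrized by `ν ∈ {0,1}^m`. -/
def elt (m : ℕ) (ν : Fin m → Bool) : ℕ := ∏ j : Fin m, if ν j then nthPrime j else 1

/-- The mass `π_m(n) = 1/(Z_m n)`. -/
def mass (m : ℕ) (ν : Fin m → Bool) : ℝ := 1 / (Zm m * (elt m ν : ℝ))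

open scoped Classical in
/-- The error term
`E_m^{(σ)}(k,K) = Π_m{ σk/K < ln n/ln p_m < σ(k+1)/K } - e^{-γ} σ/K`. -/
def Err (m : ℕ) (σ : ℝ) (K : ℕ) (k : ℕ) : ℝ :=
  (∑ ν ∈ Finset.univ.filter (fun ν : Fin m → Bool =>
      σ * k / K < Real.log (elt m ν) / Real.log (nthPrime (m - 1)) ∧
      Real.log (elt m ν) / Real.log (nthPrime (m - 1)) < σ * (k + 1) / K),
    mass m ν) - Real.exp (-Real.eulerMascheroniConstant) * σ / K

theorem nthPrime_prime (j : ℕ) : (nthPrime j).Prime := Nat.prime_nth_prime j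

theorem elt_pos (m : ℕ) (ν : Fin m → Bool) : 0 < elt m ν := by
  unfold elt
  apply Finset.prod_pos
  intro j _
  split_ifs
  · exact (nthPrime_prime _).pos
  · exact one_pos

theorem Zm_pos (m : ℕ) : 0 < Zm m := by
  unfold Zm
  apply Finset.prod_pos
  intro j _
  positivity

theorem mass_nonneg (m : ℕ) (ν : Fin m → Bool) : 0 ≤ mass m ν := by
  unfold mass
  have := Zm_pos m
  positivity

theorem sum_mass (m : ℕ) : ∑ ν : Fin m → Bool, mass m ν = 1 := by
  have h : ∑ ν : Fin m → Bool, (1 / (elt m ν : ℝ)) = Zm m := by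
    have h1 : Zm m = ∏ j : Fin m, ∑ b : Bool, (1 / ((if b then nthPrime j else 1 : ℕ) : ℝ)) := by
      unfold Zm
      rw [Finset.prod_range]
      apply Finset.prod_congr rfl
      intro j _
      simp [add_comm]
    rw [h1, Finset.prod_univ_sum, Fintype.piFinset_univ]
    apply Finset.sum_congr rfl
    intro ν _
    unfold elt
    rw [Finset.prod_div_distrib]
    push_cast
    simp
  have hz := Zm_pos m
  calc ∑ ν : Fin m → Bool, mass m ν = ∑ ν : Fin m → Bool, (1 / Zm m) * (1 / (elt m ν : ℝ)) := by
        apply Finset.sum_congr rfl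
        intro ν _
        unfold mass
        rw [one_div_mul_one_div]
    _ = 1 := by rw [← Finset.mul_sum, h]; field_simp

theorem sum_Err_bound (m : ℕ) (σ : ℝ) (hσ0 : 0 < σ) (hσ1 : σ ≤ 1) (K : ℕ) (hK : 1 ≤ K) :
    |∑ k ∈ Finset.range K, Err m σ K k| ≤ 1 := by
  classical
  have hK' : (0 : ℝ) < K := by exact_mod_cast hK
  unfold Err
  rw [Finset.sum_sub_distrib, ← Finset.sum_biUnion]
  · generalize (Finset.range K).biUnion (β := Fin m → Bool) _ = S
    have h1 : ∑ ν ∈ S, mass m ν ≤ 1 := by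
      rw [← sum_mass m]
      exact Finset.sum_le_sum_of_subset_of_nonneg (Finset.subset_univ _)
        (fun ν _ _ => mass_nonneg m ν)
    have h0 : 0 ≤ ∑ ν ∈ S, mass m ν := Finset.sum_nonneg (fun ν _ => mass_nonneg m ν)
    have h2 : ∑ k ∈ Finset.range K, Real.exp (-Real.eulerMascheroniConstant) * σ / K
        = Real.exp (-Real.eulerMascheroniConstant) * σ := by
      simp; field_simp
    rw [h2]
    have h3 : Real.exp (-Real.eulerMascheroniConstant) ≤ 1 := by
      rw [Real.exp_le_one_iff]
      linarith [Real.one_half_lt_eulerMascheroniConstant]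
    have h4 := Real.exp_pos (-Real.eulerMascheroniConstant)
    rw [abs_le]
    constructor <;> nlinarith
  · intro a _ b _ hab
    simp only [Function.onFun]
    rw [Finset.disjoint_left]
    intro ν ha hb
    simp only [Finset.mem_filter, Finset.mem_univ, true_and] at ha hb
    have key : ∀ a b : ℕ, σ * a / K < σ * (b + 1) / K → a ≤ b := by
      intro a b h
      rw [div_lt_div_iff_of_pos_right hK'] at h
      have := lt_of_mul_lt_mul_left h hσ0.le
      have : a < b + 1 := by exact_mod_cast this
      omega
    exact hab (le_antisymm (key _ _ (ha.1.trans hb.2)) (key _ _ (hb.1.trans ha.2)))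

theorem tendsto_p : Tendsto (fun m : ℕ => (nthPrime (m - 1) : ℝ)) atTop atTop := by
  have h : Tendsto nthPrime atTop atTop :=
    (Nat.nth_strictMono Nat.infinite_setOfPred_prime).tendsto_atTop
  exact tendsto_natCast_atTop_atTop.comp (h.comp (tendsto_sub_atTop_nat 1))

/-- Corollary 2 of the paper: if `limsup p_m^σ/(K(m) ln p_m) < ∞` then the mean error
`⟨E_m^{(σ)}⟩ = (1/K(m)) ∑_k E_m^{(σ)}(k,K(m))` is `o(p_m^σ/(K(m) ln p_m))`;
in particular it tends to `0`. -/
theorem mean_error_little_o (σ : ℝ) (hσ0 : 0 < σ) (hσ1 : σ ≤ 1)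
    (K : ℕ → ℕ) (hK : ∀ m, 1 ≤ K m)
    (hbd : ∃ C : ℝ, ∀ᶠ m : ℕ in atTop,
      (nthPrime (m - 1) : ℝ) ^ σ / ((K m : ℝ) * Real.log (nthPrime (m - 1))) ≤ C) :
    ((fun m : ℕ => (1 / (K m : ℝ)) * ∑ k ∈ Finset.range (K m), Err m σ (K m) k) =o[atTop]
      fun m : ℕ => (nthPrime (m - 1) : ℝ) ^ σ / ((K m : ℝ) * Real.log (nthPrime (m - 1)))) ∧
    Tendsto (fun m : ℕ => (1 / (K m : ℝ)) * ∑ k ∈ Finset.range (K m), Err m σ (K m) k)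
      atTop (𝓝 0) := by
  have hS : (fun m : ℕ => ∑ k ∈ Finset.range (K m), Err m σ (K m) k) =O[atTop]
      (fun _ => (1 : ℝ)) := by
    apply IsBigO.of_bound 1
    filter_upwards with m
    simpa using sum_Err_bound m σ hσ0 hσ1 (K m) (hK m)
  have hg : (fun _ : ℕ => (1 : ℝ)) =o[atTop] (fun m : ℕ =>
      (nthPrime (m - 1) : ℝ) ^ σ / Real.log (nthPrime (m - 1))) := by
    have h := (isLittleO_log_rpow_atTop hσ0).comp_tendsto tendsto_p
    have h2 := (isBigO_refl (fun m : ℕ => (Real.log (nthPrime (m - 1)))⁻¹) atTop).mul_isLittleO h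
    refine h2.congr (fun m => ?_) (fun m => ?_)
    · have : 0 < Real.log (nthPrime (m - 1)) :=
        Real.log_pos (by exact_mod_cast (nthPrime_prime _).one_lt)
      simp only [Function.comp]
      field_simp
    · simp only [Function.comp]
      rw [div_eq_inv_mul]
  have hmain : (fun m : ℕ => (1 / (K m : ℝ)) * ∑ k ∈ Finset.range (K m), Err m σ (K m) k)
      =o[atTop] fun m : ℕ =>
        (nthPrime (m - 1) : ℝ) ^ σ / ((K m : ℝ) * Real.log (nthPrime (m - 1))) := by
    refine ((isBigO_refl (fun m : ℕ => 1 / (K m : ℝ)) atTop).mul_isLittleO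
      (hS.trans_isLittleO hg)).congr_right (fun m => ?_)
    rw [div_mul_div_comm, one_mul]
  refine ⟨hmain, ?_⟩
  obtain ⟨C, hC⟩ := hbd
  have hb : (fun m : ℕ => (nthPrime (m - 1) : ℝ) ^ σ /
      ((K m : ℝ) * Real.log (nthPrime (m - 1)))) =O[atTop] (fun _ => (1 : ℝ)) := by
    apply IsBigO.of_bound C
    filter_upwards [hC] with m hm
    have : 0 < Real.log (nthPrime (m - 1)) :=
      Real.log_pos (by exact_mod_cast (nthPrime_prime _).one_lt)
    rw [Real.norm_of_nonneg (by positivity)]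
    simpa using hm
  exact (isLittleO_one_iff ℝ).1 (hmain.trans_isBigO hb)

end
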